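/- arXiv:1503.07143 — 2 statements merged into one kernel-verified Lean document; each statement's English description precedes it below -/
import Mathlib

section
/- Suppose the N agents evolve on [0,T) according to ẋ_i(t) = −Σ_{j∈N_i} (x_i(t)−x_j(t)) + v_i(t) (i.e. the feedback with r ≡ 1), each free input satisfies ‖v_i(t)‖ ≤ δ with δ := R̃/K, the constants 0 < R̃ < R satisfy R̃ ≤ R/√M, and initially ‖x_i(0)−x_j(0)‖ ≤ R̃ for every edge {i,j} ∈ E. Then ‖x_i(t)−x_j(t)‖ ≤ R for every edge {i,j} ∈ E and every t ∈ [0,T). -/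
/-! The argument is a Lyapunov estimate for the edge energy `E = ∑_{{i,j} ∈ E} ‖x_i - x_j‖²`.
It starts below `M R̃² ≤ R²`, and it dominates each `‖x_i - x_j‖²`, so it suffices that `E` never
exceeds `R²`. Since the Laplacian `L` is half the gradient of `E`,
`E' = 2 ⟨L x, -L x + v⟩ ≤ |v|² - |L x|²` (`hasDerivWithinAt_edgeEnergy`).

* The spectral gap in the form `λ₂ L ≤ L²` gives `|L x|² ≥ λ₂ E`
  (`lambda2_mul_dotProduct_le`, `lambda2_mul_edgeEnergy_le`).
* The choice of `K` gives `|v|² ≤ N δ² ≤ λ₂ R²` (`mul_delta_sq_le`). This uses `λ₂ ≤ |Dᵀ|²`,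
  `λ₂ ≤ N ≤ 2 (N - 1)` and `N - 1 ≤ M`, the last from connectedness.

Hence `E' ≤ 0` wherever `E ≥ R²`, and comparison with the barriers `R² + ε (1 + t)` as `ε → 0`
yields `E ≤ R²` on `[0, T)`. The incidence matrix is tied to the graph Laplacian by
`D Dᵀ = L` (`incMat_mul_transpose`). -/

open scoped BigOperators
open Matrix

/-- Induced Euclidean (spectral) norm of a real matrix. -/
noncomputable def opNorm {m k : ℕ} (A : Matrix (Fin m) (Fin k) ℝ) : ℝ :=
  ‖LinearMap.toContinuousLinearMap (Matrix.toEuclideanLin A)‖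

/-- The second-smallest eigenvalue (counted with multiplicity) of a real symmetric matrix. -/
noncomputable def lambda2 {N : ℕ} (A : Matrix (Fin N) (Fin N) ℝ) : ℝ :=
  if h : A.IsHermitian then (List.insertionSort (· ≤ ·) (List.ofFn h.eigenvalues)).getD 1 0 else 0

/-- Oriented incidence matrix determined by tail/head maps `tl hd : Fin M → Fin N`:
column `l` has `+1` at the head `hd l` and `-1` at the tail `tl l`. -/
def incMat {N M : ℕ} (tl hd : Fin M → Fin N) : Matrix (Fin N) (Fin M) ℝ :=
  Matrix.of fun k l => if k = hd l then 1 else if k = tl l then -1 else 0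

/-- `K = 2 √(N(N-1)) |D(G)ᵀ| / λ₂(G)²`. -/
noncomputable def Kconst {N M : ℕ} (tl hd : Fin M → Fin N) : ℝ :=
  2 * Real.sqrt ((N : ℝ) * ((N : ℝ) - 1)) * opNorm (incMat tl hd)ᵀ /
    (lambda2 (incMat tl hd * (incMat tl hd)ᵀ)) ^ 2

lemma exists_eigenvalue_eq_lambda2 {N : ℕ} (hN : 2 ≤ N) {A : Matrix (Fin N) (Fin N) ℝ}
    (h : A.IsHermitian) : ∃ k, h.eigenvalues k = lambda2 A := by
  set s := List.insertionSort (· ≤ ·) (List.ofFn h.eigenvalues) with hs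
  have hlen : 1 < s.length := by simp [hs]; omega
  have hl : lambda2 A = s[1] := by
    simp only [lambda2, dif_pos h]
    exact List.getD_eq_getElem _ _ hlen
  have : s[1] ∈ List.ofFn h.eigenvalues :=
    (List.mem_insertionSort (· ≤ ·)).1 (List.getElem_mem hlen)
  rw [hl]
  simpa using this

/-- Since a singular positive semidefinite matrix has smallest eigenvalue `0`, every other
entry of its sorted spectrum is at least the second one. -/
lemma eigenvalue_eq_zero_or_lambda2_le {N : ℕ} (hN : 2 ≤ N) {A : Matrix (Fin N) (Fin N) ℝ}
    (h : A.IsHermitian) (hpos : A.PosSemidef) (hdet : A.det = 0) (k : Fin N) :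
    h.eigenvalues k = 0 ∨ lambda2 A ≤ h.eigenvalues k := by
  set s := List.insertionSort (· ≤ ·) (List.ofFn h.eigenvalues) with hs
  have hlen : 1 < s.length := by simp [hs]; omega
  have hl : lambda2 A = s[1] := by
    simp only [lambda2, dif_pos h]
    exact List.getD_eq_getElem _ _ hlen
  have hmem : ∀ j, h.eigenvalues j ∈ s := fun j =>
    (List.mem_insertionSort (· ≤ ·)).2 (by simp)
  have hsorted : s.Pairwise (· ≤ ·) := List.pairwise_insertionSort _ _
  have hmono : ∀ (a b : ℕ) (hab : a ≤ b) (hb : b < s.length), s[a] ≤ s[b] := by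
    intro a b hab hb
    rcases hab.lt_or_eq with hlt | rfl
    · exact List.pairwise_iff_getElem.1 hsorted a b _ hb hlt
    · exact le_rfl
  have h0 : s[0]'(by omega) = 0 := by
    apply le_antisymm
    · rw [h.det_eq_prod_eigenvalues, Finset.prod_eq_zero_iff] at hdet
      obtain ⟨j, -, hj⟩ := hdet
      obtain ⟨b, hb, hbj⟩ := List.getElem_of_mem (hmem j)
      have hj' : h.eigenvalues j = 0 := by simpa using hj
      rw [← hj', ← hbj]
      exact hmono 0 b (Nat.zero_le _) hb
    · have : s[0]'(by omega) ∈ List.ofFn h.eigenvalues :=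
        (List.mem_insertionSort (· ≤ ·)).1 (List.getElem_mem _)
      rw [List.mem_ofFn] at this
      obtain ⟨j, hj⟩ := this
      rw [← hj]
      exact hpos.eigenvalues_nonneg j
  obtain ⟨b, hb, hbk⟩ := List.getElem_of_mem (hmem k)
  rw [← hbk, hl]
  rcases Nat.eq_zero_or_pos b with rfl | hbpos
  · exact Or.inl h0
  · exact Or.inr (hmono 1 b hbpos hb)

/-- The matrix inequality `λ₂ A ≤ A²`, read off in an orthonormal eigenbasis. -/
lemma lambda2_mul_dotProduct_le {N : ℕ} (hN : 2 ≤ N) {A : Matrix (Fin N) (Fin N) ℝ}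
    (hpos : A.PosSemidef) (hdet : A.det = 0) (u : Fin N → ℝ) :
    lambda2 A * (u ⬝ᵥ (A *ᵥ u)) ≤ (A *ᵥ u) ⬝ᵥ (A *ᵥ u) := by
  have h : A.IsHermitian := hpos.isHermitian
  have hT : Aᵀ = A := by simpa using h.eq
  set b := h.eigenvectorBasis with hb
  have hexp : ∀ y z : Fin N → ℝ, y ⬝ᵥ z = ∑ k, (y ⬝ᵥ (b k).ofLp) * ((b k).ofLp ⬝ᵥ z) := by
    intro y z
    have := b.sum_inner_mul_inner (WithLp.toLp 2 y) (WithLp.toLp 2 z)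
    simp only [EuclideanSpace.inner_eq_star_dotProduct, star_trivial] at this
    rw [dotProduct_comm y z, ← this]
    exact Finset.sum_congr rfl fun k _ => by
      rw [dotProduct_comm y, dotProduct_comm z]
  have heig : ∀ k, (b k).ofLp ⬝ᵥ (A *ᵥ u) = h.eigenvalues k * ((b k).ofLp ⬝ᵥ u) := by
    intro k
    rw [dotProduct_mulVec, ← mulVec_transpose, hT, hb, h.mulVec_eigenvectorBasis, smul_dotProduct,
      smul_eq_mul]
  rw [hexp u, hexp (A *ᵥ u), Finset.mul_sum]
  refine Finset.sum_le_sum fun k _ => ?_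
  rw [dotProduct_comm (A *ᵥ u), dotProduct_comm u, heig]
  have hnn := hpos.eigenvalues_nonneg k
  rcases eigenvalue_eq_zero_or_lambda2_le hN h hpos hdet k with h0 | hle
  · rw [h0]; simp
  · nlinarith [mul_nonneg (mul_nonneg hnn (sub_nonneg.2 hle)) (sq_nonneg ((b k).ofLp ⬝ᵥ u))]

/-- The off-diagonal entries of `D Dᵀ` and of the Laplacian agree because each edge is listed
exactly once; the diagonal entries then agree because both matrices have zero row sums. -/
lemma incMat_mul_transpose {N M : ℕ} (G : SimpleGraph (Fin N)) [DecidableRel G.Adj]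
    (tl hd : Fin M → Fin N) (hadj : ∀ l, G.Adj (tl l) (hd l))
    (henum : ∀ e ∈ G.edgeSet, ∃! l : Fin M, s(tl l, hd l) = e) :
    incMat tl hd * (incMat tl hd)ᵀ = G.lapMatrix ℝ := by
  have hoff : ∀ i j, i ≠ j → (incMat tl hd * (incMat tl hd)ᵀ) i j = G.lapMatrix ℝ i j := by
    intro i j hij
    have hR : G.lapMatrix ℝ i j = -(if G.Adj i j then 1 else 0) := by
      simp [SimpleGraph.lapMatrix, SimpleGraph.degMatrix, hij, SimpleGraph.adjMatrix_apply]
    have hterm : ∀ l, incMat tl hd i l * incMat tl hd j l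
        = -(if s(tl l, hd l) = s(i, j) then 1 else 0) := by
      intro l
      have hne : tl l ≠ hd l := (hadj l).ne
      simp only [incMat, Matrix.of_apply, Sym2.eq_iff]
      split_ifs <;> grind
    rw [hR, Matrix.mul_apply]
    simp only [Matrix.transpose_apply, hterm, Finset.sum_neg_distrib, neg_inj]
    split_ifs with ha
    · obtain ⟨l, hl, huniq⟩ := henum s(i, j) ha
      rw [Finset.sum_eq_single l]
      · simp [hl]
      · intro l' _ hne
        exact if_neg fun h => hne (huniq l' h)
      · simp
    · refine Finset.sum_eq_zero fun l _ => if_neg fun h => ha ?_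
      have := hadj l
      rw [← SimpleGraph.mem_edgeSet, h] at this
      exact this
  have hrow1 : ∀ i, ∑ j, (incMat tl hd * (incMat tl hd)ᵀ) i j = 0 := by
    intro i
    simp only [Matrix.mul_apply, Matrix.transpose_apply]
    rw [Finset.sum_comm]
    refine Finset.sum_eq_zero fun l _ => ?_
    have hne : tl l ≠ hd l := (hadj l).ne
    have hcol : ∀ j, incMat tl hd j l
        = (if j = hd l then 1 else 0) - (if j = tl l then 1 else 0) := by
      intro j
      simp only [incMat, Matrix.of_apply]
      split_ifs <;> grind
    rw [← Finset.mul_sum]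
    simp [hcol]
  have hrow2 : ∀ i, ∑ j, G.lapMatrix ℝ i j = 0 := by
    intro i
    have := congrFun (G.lapMatrix_mulVec_const_eq_zero (R := ℝ)) i
    simpa [Matrix.mulVec, dotProduct] using this
  ext i j
  by_cases hij : i = j
  · subst hij
    have h1 := hrow1 i
    have h2 := hrow2 i
    rw [← Finset.add_sum_erase _ _ (Finset.mem_univ i)] at h1 h2
    have : ∑ j ∈ Finset.univ.erase i, (incMat tl hd * (incMat tl hd)ᵀ) i j
        = ∑ j ∈ Finset.univ.erase i, G.lapMatrix ℝ i j :=
      Finset.sum_congr rfl fun j hj => hoff i j (Finset.ne_of_mem_erase hj).symm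
    linarith
  · exact hoff i j hij

lemma dotProduct_eigenvectorBasis_self {N : ℕ} {A : Matrix (Fin N) (Fin N) ℝ}
    (h : A.IsHermitian) (k : Fin N) :
    (h.eigenvectorBasis k).ofLp ⬝ᵥ (h.eigenvectorBasis k).ofLp = 1 := by
  have := real_inner_self_eq_norm_sq (h.eigenvectorBasis k)
  rw [h.eigenvectorBasis.orthonormal.1 k] at this
  rw [EuclideanSpace.inner_eq_star_dotProduct] at this
  simpa only [star_trivial, one_pow] using this

lemma eigenvalue_eq_dotProduct {N : ℕ} {A : Matrix (Fin N) (Fin N) ℝ}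
    (h : A.IsHermitian) (k : Fin N) :
    h.eigenvalues k
      = (h.eigenvectorBasis k).ofLp ⬝ᵥ (A *ᵥ (h.eigenvectorBasis k).ofLp) := by
  rw [h.mulVec_eigenvectorBasis, dotProduct_smul, dotProduct_eigenvectorBasis_self, smul_eq_mul,
    mul_one]

lemma lambda2_le_opNorm_sq {N M : ℕ} (hN : 2 ≤ N) (D : Matrix (Fin N) (Fin M) ℝ) :
    lambda2 (D * Dᵀ) ≤ opNorm Dᵀ ^ 2 := by
  have h : (D * Dᵀ).IsHermitian := by
    simpa using Matrix.isHermitian_mul_conjTranspose_self D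
  obtain ⟨k, hk⟩ := exists_eigenvalue_eq_lambda2 hN h
  set w := h.eigenvectorBasis k with hw
  have hnorm : ‖w‖ = 1 := h.eigenvectorBasis.orthonormal.1 k
  have hle := (LinearMap.toContinuousLinearMap (Matrix.toEuclideanLin Dᵀ)).le_opNorm w
  rw [hnorm, mul_one] at hle
  have hsq : lambda2 (D * Dᵀ)
      = ‖(LinearMap.toContinuousLinearMap (Matrix.toEuclideanLin Dᵀ)) w‖ ^ 2 := by
    rw [← hk, eigenvalue_eq_dotProduct, EuclideanSpace.real_norm_sq_eq, ← hw, ← mulVec_mulVec,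
      dotProduct_mulVec, ← mulVec_transpose]
    simp [dotProduct, sq, Matrix.toLpLin_apply]
  rw [hsq]
  exact pow_le_pow_left₀ (norm_nonneg _) hle 2

/-- The Laplacian quadratic form is largest for the complete graph, for which it is at most
`N |u|²`. -/
lemma lambda2_lapMatrix_le {N : ℕ} (hN : 2 ≤ N) (G : SimpleGraph (Fin N)) [DecidableRel G.Adj] :
    lambda2 (G.lapMatrix ℝ) ≤ N := by
  have h := G.isHermitian_lapMatrix (R := ℝ)
  obtain ⟨k, hk⟩ := exists_eigenvalue_eq_lambda2 hN h
  have h1 := dotProduct_eigenvectorBasis_self h k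
  rw [← hk, eigenvalue_eq_dotProduct]
  set u := (h.eigenvectorBasis k).ofLp
  rw [← Matrix.toLinearMap₂'_apply', SimpleGraph.lapMatrix_toLinearMap₂']
  have hle : ∑ i, ∑ j, (if G.Adj i j then (u i - u j) ^ 2 else 0)
      ≤ ∑ i, ∑ j, (u i - u j) ^ 2 := by
    refine Finset.sum_le_sum fun i _ => Finset.sum_le_sum fun j _ => ?_
    split_ifs
    · exact le_rfl
    · positivity
  have hcomp : ∑ i, ∑ j, (u i - u j) ^ 2 = 2 * N * (u ⬝ᵥ u) - 2 * (∑ i, u i) ^ 2 := by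
    simp only [sub_sq, Finset.sum_add_distrib, Finset.sum_sub_distrib, dotProduct, Finset.sum_const,
      ← Finset.mul_sum, ← Finset.sum_mul, Finset.card_univ, Fintype.card_fin, nsmul_eq_mul, ← sq]
    ring
  rw [h1] at hcomp
  nlinarith [sq_nonneg (∑ i, u i)]

/-- The edge energy `∑_{{i,j} ∈ E} ‖x_i - x_j‖²`, written as half the sum over ordered pairs. -/
noncomputable def edgeEnergy {N n : ℕ} (G : SimpleGraph (Fin N)) [DecidableRel G.Adj]
    (x : Fin N → EuclideanSpace ℝ (Fin n)) : ℝ :=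
  (∑ i, ∑ j ∈ G.neighborFinset i, ‖x i - x j‖ ^ 2) / 2

/-- The vector-valued Laplacian `(L x)_i = ∑_{j ∈ N_i} (x_i - x_j)`. -/
noncomputable def lapVec {N n : ℕ} (G : SimpleGraph (Fin N)) [DecidableRel G.Adj]
    (x : Fin N → EuclideanSpace ℝ (Fin n)) (i : Fin N) : EuclideanSpace ℝ (Fin n) :=
  ∑ j ∈ G.neighborFinset i, (x i - x j)

lemma sum_neighbor_comm {N : ℕ} (G : SimpleGraph (Fin N)) [DecidableRel G.Adj]
    (f : Fin N → Fin N → ℝ) :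
    ∑ i, ∑ j ∈ G.neighborFinset i, f i j = ∑ i, ∑ j ∈ G.neighborFinset i, f j i := by
  refine Finset.sum_comm' fun i j => ?_
  simp [SimpleGraph.adj_comm]

/-- The spectral gap, applied to each of the `n` coordinates of the configuration. -/
lemma lambda2_mul_edgeEnergy_le {N n : ℕ} (hN : 2 ≤ N) (G : SimpleGraph (Fin N))
    [DecidableRel G.Adj] (x : Fin N → EuclideanSpace ℝ (Fin n)) :
    lambda2 (G.lapMatrix ℝ) * edgeEnergy G x ≤ ∑ i, ‖lapVec G x i‖ ^ 2 := by
  have : Nonempty (Fin N) := ⟨⟨0, by omega⟩⟩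
  have hgap := fun c : Fin n => lambda2_mul_dotProduct_le hN (G.posSemidef_lapMatrix ℝ)
    G.det_lapMatrix_eq_zero fun i => x i c
  have hE : edgeEnergy G x
      = ∑ c, (fun i => x i c) ⬝ᵥ (G.lapMatrix ℝ *ᵥ fun i => x i c) := by
    simp only [← Matrix.toLinearMap₂'_apply', SimpleGraph.lapMatrix_toLinearMap₂']
    rw [← Finset.sum_div, Finset.sum_comm, edgeEnergy]
    congr 1
    refine Finset.sum_congr rfl fun i _ => ?_
    rw [Finset.sum_comm, G.neighborFinset_eq_filter, Finset.sum_filter]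
    refine Finset.sum_congr rfl fun j _ => ?_
    split_ifs <;> simp [EuclideanSpace.real_norm_sq_eq]
  have hW : ∑ i, ‖lapVec G x i‖ ^ 2 = ∑ c, (G.lapMatrix ℝ *ᵥ fun i => x i c) ⬝ᵥ
      (G.lapMatrix ℝ *ᵥ fun i => x i c) := by
    simp only [EuclideanSpace.real_norm_sq_eq, dotProduct]
    rw [Finset.sum_comm]
    refine Finset.sum_congr rfl fun c _ => Finset.sum_congr rfl fun i _ => ?_
    rw [SimpleGraph.lapMatrix_mulVec_apply, ← sq]
    simp [lapVec]
  rw [hE, hW, Finset.mul_sum]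
  exact Finset.sum_le_sum fun c _ => hgap c

/-- The Laplacian is half the gradient of the edge energy. -/
lemma hasDerivWithinAt_edgeEnergy {N n : ℕ} (G : SimpleGraph (Fin N)) [DecidableRel G.Adj]
    {x : Fin N → ℝ → EuclideanSpace ℝ (Fin n)} {x' : Fin N → EuclideanSpace ℝ (Fin n)}
    {s : Set ℝ} {t : ℝ} (hx : ∀ i, HasDerivWithinAt (x i) (x' i) s t) :
    HasDerivWithinAt (fun τ => edgeEnergy G fun i => x i τ)
      (2 * ∑ i, inner ℝ (lapVec G (fun i => x i t) i) (x' i)) s t := by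
  have h : HasDerivWithinAt (fun τ => edgeEnergy G fun i => x i τ)
      ((∑ i, ∑ j ∈ G.neighborFinset i, 2 * inner ℝ (x i t - x j t) (x' i - x' j)) / 2) s t := by
    unfold edgeEnergy
    refine HasDerivWithinAt.div_const (HasDerivWithinAt.fun_sum fun i _ =>
      HasDerivWithinAt.fun_sum fun j _ => ?_) _
    exact ((hx i).sub (hx j)).norm_sq
  convert h using 1
  have hswap := sum_neighbor_comm G fun i j => inner ℝ (x i t - x j t) (x' j)
  simp only [lapVec, sum_inner]
  have hneg : ∑ i, ∑ j ∈ G.neighborFinset i, inner ℝ (x j t - x i t) (x' i)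
      = -∑ i, ∑ j ∈ G.neighborFinset i, inner ℝ (x i t - x j t) (x' i) := by
    simp only [← Finset.sum_neg_distrib, ← inner_neg_left, neg_sub]
  simp only [inner_sub_right, ← Finset.mul_sum, Finset.sum_sub_distrib, hswap, hneg]
  ring

/-- The size of `K` is chosen so that the disturbance, `|v|² ≤ N δ²`, cannot exceed the
restoring term, `|L x|² ≥ λ₂ R²`, on the level set `R²` of the energy. Divisions by a vanishing
`λ₂` or `|Dᵀ|` give `δ = 0`, for which the bound is trivial. -/
lemma mul_delta_sq_le {N M : ℕ} (hN : 2 ≤ N)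
    (G : SimpleGraph (Fin N)) [DecidableRel G.Adj] (hconn : G.Connected)
    (tl hd : Fin M → Fin N) (hadj : ∀ l, G.Adj (tl l) (hd l))
    (henum : ∀ e ∈ G.edgeSet, ∃! l : Fin M, s(tl l, hd l) = e)
    (hM : G.edgeFinset.card = M)
    {R R' : ℝ} (hRM : (M : ℝ) * R' ^ 2 ≤ R ^ 2) :
    N * (R' / Kconst tl hd) ^ 2 ≤ lambda2 (G.lapMatrix ℝ) * R ^ 2 := by
  have hlap := incMat_mul_transpose G tl hd hadj henum
  have hop := lambda2_le_opNorm_sq hN (incMat tl hd)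
  have hle := lambda2_lapMatrix_le hN G
  have hMN : N ≤ M + 1 := by
    have := hconn.card_vert_le_card_edgeSet_add_one
    rwa [Nat.card_eq_fintype_card, Fintype.card_fin, Nat.card_eq_fintype_card,
      ← SimpleGraph.edgeFinset_card, hM] at this
  have hMN' : (N : ℝ) - 1 ≤ M := by
    have : (N : ℝ) ≤ M + 1 := by exact_mod_cast hMN
    linarith
  have hN' : (2 : ℝ) ≤ N := by exact_mod_cast hN
  have hnn : 0 ≤ lambda2 (G.lapMatrix ℝ) := by
    obtain ⟨k, hk⟩ := exists_eigenvalue_eq_lambda2 hN (G.isHermitian_lapMatrix (R := ℝ))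
    rw [← hk]
    exact (G.posSemidef_lapMatrix ℝ).eigenvalues_nonneg k
  unfold Kconst
  rw [hlap] at hop ⊢
  set μ := lambda2 (G.lapMatrix ℝ)
  set a := opNorm (incMat tl hd)ᵀ
  rcases hnn.eq_or_lt with h0 | hμ
  · simp [← h0]
  have ha : 0 < a ^ 2 := hμ.trans_le hop
  have hN1 : 0 < (N : ℝ) - 1 := by linarith
  have hδ : N * (R' / (2 * √(N * (N - 1)) * a / μ ^ 2)) ^ 2
      = μ ^ 4 * R' ^ 2 / (4 * (N - 1) * a ^ 2) := by
    have hs : √((N : ℝ) * (N - 1)) ^ 2 = N * (N - 1) := Real.sq_sqrt (by positivity)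
    rw [div_div_eq_mul_div, div_pow, mul_pow, mul_pow, mul_pow, hs]
    field_simp
    ring
  rw [hδ, div_le_iff₀ (by positivity)]
  have h1 : μ ^ 2 ≤ 4 * (N - 1) ^ 2 := by nlinarith
  calc μ ^ 4 * R' ^ 2 = μ * (μ * (μ ^ 2 * R' ^ 2)) := by ring
    _ ≤ μ * (a ^ 2 * (4 * (N - 1) ^ 2 * R' ^ 2)) := by gcongr
    _ = μ * (a ^ 2 * (4 * (N - 1) * ((N - 1) * R' ^ 2))) := by ring
    _ ≤ μ * (a ^ 2 * (4 * (N - 1) * (M * R' ^ 2))) := by gcongr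
    _ ≤ μ * (a ^ 2 * (4 * (N - 1) * R ^ 2)) := by gcongr
    _ = μ * R ^ 2 * (4 * (N - 1) * a ^ 2) := by ring

lemma norm_sq_le_edgeEnergy {N n : ℕ} (G : SimpleGraph (Fin N)) [DecidableRel G.Adj]
    (x : Fin N → EuclideanSpace ℝ (Fin n)) {i j : Fin N} (hij : G.Adj i j) :
    ‖x i - x j‖ ^ 2 ≤ edgeEnergy G x := by
  have hrow : ∀ a b, G.Adj a b →
      ‖x a - x b‖ ^ 2 ≤ ∑ c ∈ G.neighborFinset a, ‖x a - x c‖ ^ 2 := fun a b hab =>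
    Finset.single_le_sum (f := fun c => ‖x a - x c‖ ^ 2) (fun _ _ => by positivity) (by simpa)
  have hpair : ∑ a ∈ {i, j}, ∑ c ∈ G.neighborFinset a, ‖x a - x c‖ ^ 2
      ≤ ∑ a, ∑ c ∈ G.neighborFinset a, ‖x a - x c‖ ^ 2 :=
    Finset.sum_le_sum_of_subset_of_nonneg (Finset.subset_univ _) fun _ _ _ => by positivity
  rw [Finset.sum_pair hij.ne] at hpair
  have h1 := hrow i j hij
  have h2 := hrow j i hij.symm
  rw [norm_sub_rev] at h2
  unfold edgeEnergy
  linarith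

lemma edgeEnergy_le {N n : ℕ} (G : SimpleGraph (Fin N)) [DecidableRel G.Adj]
    (x : Fin N → EuclideanSpace ℝ (Fin n)) {r : ℝ} (h : ∀ i j, G.Adj i j → ‖x i - x j‖ ≤ r) :
    edgeEnergy G x ≤ G.edgeFinset.card * r ^ 2 := by
  have hdeg : (∑ i, (G.degree i : ℝ)) = 2 * G.edgeFinset.card := by
    exact_mod_cast G.sum_degrees_eq_twice_card_edges
  have : ∑ i, ∑ j ∈ G.neighborFinset i, ‖x i - x j‖ ^ 2 ≤ ∑ i, (G.degree i : ℝ) * r ^ 2 := by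
    refine Finset.sum_le_sum fun i _ => ?_
    rw [← G.card_neighborFinset_eq_degree, ← nsmul_eq_mul]
    refine Finset.sum_le_card_nsmul _ _ _ fun j hj => ?_
    exact pow_le_pow_left₀ (norm_nonneg _) (h i j (by simpa using hj)) 2
  rw [← Finset.sum_mul, hdeg] at this
  unfold edgeEnergy
  linarith

/-- **Connectivity maintenance for the linear feedback (Corollary, case (L)).** If the agents
evolve according to `ẋ_i = -∑_{j∈N_i} (x_i-x_j) + v_i` on `[0,T)` with `‖v_i(t)‖ ≤ δ = R̃/K`,
`R̃ ≤ R/√M`, and initially `‖x_i(0)-x_j(0)‖ ≤ R̃` on every edge, then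
`‖x_i(t)-x_j(t)‖ ≤ R` on every edge for every `t ∈ [0,T)`. -/
theorem connectivity_linear {N M n : ℕ} (hN : 2 ≤ N)
    (G : SimpleGraph (Fin N)) [DecidableRel G.Adj] (hconn : G.Connected)
    (tl hd : Fin M → Fin N) (hadj : ∀ l, G.Adj (tl l) (hd l))
    (henum : ∀ e ∈ G.edgeSet, ∃! l : Fin M, s(tl l, hd l) = e)
    (hM : G.edgeFinset.card = M)
    (R R' T : ℝ) (hR'pos : 0 < R') (hR'R : R' < R)
    (hR'M : R' ≤ R / Real.sqrt M)
    (x v : Fin N → ℝ → EuclideanSpace ℝ (Fin n))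
    (hdyn : ∀ i, ∀ t ∈ Set.Ico (0:ℝ) T, HasDerivWithinAt (x i)
      ((-∑ j ∈ G.neighborFinset i, (x i t - x j t)) + v i t) (Set.Ico (0:ℝ) T) t)
    (hv : ∀ i, ∀ t ∈ Set.Ico (0:ℝ) T, ‖v i t‖ ≤ R' / Kconst tl hd)
    (hinit : ∀ i j, G.Adj i j → ‖x i 0 - x j 0‖ ≤ R') :
    ∀ t ∈ Set.Ico (0:ℝ) T, ∀ i j, G.Adj i j → ‖x i t - x j t‖ ≤ R := by
  set δ := R' / Kconst tl hd
  have hMpos : 0 < (M : ℝ) := by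
    rcases Nat.eq_zero_or_pos M with rfl | h
    · simp only [Nat.cast_zero, Real.sqrt_zero, div_zero] at hR'M
      linarith
    · exact_mod_cast h
  have hRM : (M : ℝ) * R' ^ 2 ≤ R ^ 2 := by
    have h := (le_div_iff₀ (Real.sqrt_pos.2 hMpos)).1 hR'M
    have h2 := pow_le_pow_left₀ (by positivity) h 2
    rw [mul_pow, Real.sq_sqrt hMpos.le] at h2
    linarith
  have hδ : N * δ ^ 2 ≤ lambda2 (G.lapMatrix ℝ) * R ^ 2 :=
    mul_delta_sq_le hN G hconn tl hd hadj henum hM hRM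
  have hnn : 0 ≤ lambda2 (G.lapMatrix ℝ) := by
    obtain ⟨k, hk⟩ := exists_eigenvalue_eq_lambda2 hN (G.isHermitian_lapMatrix (R := ℝ))
    rw [← hk]
    exact (G.posSemidef_lapMatrix ℝ).eigenvalues_nonneg k
  set E : ℝ → ℝ := fun τ => edgeEnergy G fun i => x i τ with hE
  set w : ℝ → Fin N → EuclideanSpace ℝ (Fin n) := fun τ => lapVec G fun i => x i τ with hw
  have hderiv : ∀ τ ∈ Set.Ico (0:ℝ) T,
      HasDerivWithinAt E (2 * ∑ i, inner ℝ (w τ i) (-w τ i + v i τ)) (Set.Ico 0 T) τ :=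
    fun τ hτ => hasDerivWithinAt_edgeEnergy G fun i => hdyn i τ hτ
  have hneg : ∀ τ ∈ Set.Ico (0:ℝ) T, R ^ 2 ≤ E τ →
      2 * ∑ i, inner ℝ (w τ i) (-w τ i + v i τ) ≤ 0 := by
    intro τ hτ hRE
    have hv2 : ∑ i, ‖v i τ‖ ^ 2 ≤ N * δ ^ 2 := by
      have : ∑ i, ‖v i τ‖ ^ 2 ≤ ∑ _i : Fin N, δ ^ 2 := Finset.sum_le_sum fun i _ =>
        pow_le_pow_left₀ (norm_nonneg _) (hv i τ hτ) 2
      simpa using this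
    have hgap : lambda2 (G.lapMatrix ℝ) * R ^ 2 ≤ ∑ i, ‖w τ i‖ ^ 2 :=
      (mul_le_mul_of_nonneg_left hRE hnn).trans (lambda2_mul_edgeEnergy_le hN G _)
    have hterm : 2 * ∑ i, inner ℝ (w τ i) (-w τ i + v i τ)
        ≤ ∑ i, ‖v i τ‖ ^ 2 - ∑ i, ‖w τ i‖ ^ 2 := by
      rw [Finset.mul_sum, ← Finset.sum_sub_distrib]
      refine Finset.sum_le_sum fun i _ => ?_
      rw [inner_add_right, inner_neg_right, real_inner_self_eq_norm_sq]
      nlinarith [real_inner_le_norm (w τ i) (v i τ), sq_nonneg (‖w τ i‖ - ‖v i τ‖)]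
    linarith
  intro t ht i j hij
  have hsub : Set.Icc 0 t ⊆ Set.Ico 0 T := fun τ hτ => ⟨hτ.1, hτ.2.trans_lt ht.2⟩
  -- The barriers `R² + ε (1 + τ)` have positive slope, so the non-strict decay suffices.
  have hbarrier : ∀ ε > 0, E t ≤ R ^ 2 + ε * (1 + t) := by
    intro ε hε
    refine image_le_of_deriv_right_lt_deriv_boundary (f := E)
      (f' := fun τ => 2 * ∑ i, inner ℝ (w τ i) (-w τ i + v i τ))
      (B := fun τ => R ^ 2 + ε * (1 + τ)) (B' := fun _ => ε) (a := 0) (b := t)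
      (fun τ hτ => ((hderiv τ (hsub hτ)).continuousWithinAt).mono hsub)
      (fun τ hτ => ?_) ?_ (fun τ => ?_) (fun τ hτ hEB => ?_) ⟨ht.1, le_rfl⟩
    · refine (hderiv τ (hsub ⟨hτ.1, hτ.2.le⟩)).mono_of_mem_nhdsWithin ?_
      exact mem_nhdsWithin.2 ⟨Set.Iio T, isOpen_Iio, hτ.2.trans ht.2,
        fun y hy => ⟨hτ.1.trans hy.2, hy.1⟩⟩
    · have h0 := edgeEnergy_le G (fun i => x i 0) hinit
      rw [hM] at h0
      show edgeEnergy G (fun i => x i 0) ≤ R ^ 2 + ε * (1 + 0)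
      linarith
    · simpa using (((hasDerivAt_id τ).const_add 1).const_mul ε).const_add (R ^ 2)
    · refine (hneg τ (hsub ⟨hτ.1, hτ.2.le⟩) ?_).trans_lt hε
      have : 0 ≤ ε * (1 + τ) := mul_nonneg hε.le (by linarith [hτ.1])
      rw [hEB]
      linarith
  have hEt : E t ≤ R ^ 2 := by
    refine le_of_forall_pos_le_add fun ε hε => ?_
    have h1 : 0 < 1 + t := by linarith [ht.1]
    have := hbarrier (ε / (1 + t)) (by positivity)
    rwa [div_mul_cancel₀ _ h1.ne'] at this
  exact le_of_sq_le_sq ((norm_sq_le_edgeEnergy G (fun i => x i t) hij).trans hEt)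
    (by linarith)
end

section
/- Let 0 < R̃ < R with R̃ ≤ (2/(3M−1))^{1/3}·R, and let r(s) := 1 for s ∈ [0,R̃], r(s) := s/R̃ for s ∈ (R̃,R], r(s) := R/R̃ for s > R. Suppose the N agents evolve on [0,T) according to ẋ_i(t) = −Σ_{j∈N_i} r(‖x_i(t)−x_j(t)‖)(x_i(t)−x_j(t)) + v_i(t), each free input satisfies ‖v_i(t)‖ ≤ δ with δ := R̃/K, and initially ‖x_i(0)−x_j(0)‖ ≤ R̃ for every edge {i,j} ∈ E. Then ‖x_i(t)−x_j(t)‖ ≤ R for every edge {i,j} ∈ E and every t ∈ [0,T). -/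
/-! The proof is an energy argument. Attach to an edge of length `ρ` the potential
`P(ρ) = ∫₀^ρ r(s) s ds`, and let `V` be the sum of the potentials over all edges. The feedback field
`g_i = ∑_{j ∈ N_i} r(‖x_i - x_j‖) (x_i - x_j)` is the gradient of `V`, so along the dynamics
`V' = ∑_i ⟪g_i, -g_i + v_i⟫ ≤ -|g|² + √N δ |g|`, and `V` is nonincreasing whenever `|g| ≥ √N δ`.

This lower bound on `g` holds as soon as one edge is longer than `R'` (`dissipation`). Let `y` be the
configuration centred at its barycentre. Since `r ≥ 1`, the Poincaré inequality for the Laplacian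
gives `⟨g, y⟩ ≥ |Dᵀ y|² ≥ λ₂ |y|²` (`lambda2_mul_sum_norm_sq_le`), hence `|g| ≥ λ₂ |y|`, while an edge
longer than `R'` forces `2 |y|² ≥ R'²`. What remains is `λ₂² ≤ 2 (N - 1) |Dᵀ|²`
(`lambda2_sq_le`), which is how `K` enters.

Initially `V ≤ M P(R')`. If `V > M P(R')`, then some edge is longer than `R'`, so `V` is nonincreasing
there; therefore `V ≤ M P(R')` at all times (`le_of_deriv_nonpos_above`). The condition on `R'` says
`M P(R') ≤ P(R)` (`mul_edgePot_inner_le`), so no single edge can become longer than `R`, as `P` is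
strictly increasing and nonnegative. -/

open scoped BigOperators
open Matrix

/-- The nonlinear gain: `r(s) = 1` on `[0,R̃]`, `r(s) = s/R̃` on `(R̃,R]`, `r(s) = R/R̃`
for `s > R`. -/
noncomputable def rNL (R' R s : ℝ) : ℝ :=
  if s ≤ R' then 1 else if s ≤ R then s / R' else R / R'

/-! ### The second-smallest eigenvalue and the Poincaré inequality on the graph -/

/-- All eigenvalues except the one at a single index `k₀` are at least `lambda2 A`. -/
theorem exists_lambda2_le {N : ℕ} (hN : 2 ≤ N) {A : Matrix (Fin N) (Fin N) ℝ}
    (hA : A.IsHermitian) :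
    ∃ k₀ k₁ : Fin N, lambda2 A = hA.eigenvalues k₁ ∧
      ∀ i, i ≠ k₀ → lambda2 A ≤ hA.eigenvalues i := by
  set f := hA.eigenvalues with hf
  set σ := Tuple.sort f with hσ
  have hmono : Monotone (f ∘ σ) := Tuple.monotone_sort f
  have hlist : List.insertionSort (· ≤ ·) (List.ofFn f) = List.ofFn (f ∘ σ) :=
    List.Perm.eq_of_sortedLE List.sortedLE_insertionSort hmono.sortedLE_ofFn
      ((List.perm_insertionSort _ _).trans (σ.ofFn_comp_perm f).symm)
  have h2 : lambda2 A = f (σ ⟨1, by omega⟩) := by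
    have h1 : 1 < (List.ofFn (f ∘ σ)).length := by simp; omega
    rw [lambda2, dif_pos hA, hlist, List.getD_eq_getElem _ _ h1, List.getElem_ofFn]
    rfl
  refine ⟨σ ⟨0, by omega⟩, σ ⟨1, by omega⟩, h2, fun i hi => ?_⟩
  obtain ⟨j, rfl⟩ := σ.surjective i
  rw [h2]
  have hj : (⟨1, by omega⟩ : Fin N) ≤ j := by
    rw [Fin.le_def]
    by_contra hlt
    exact hi (congrArg σ (Fin.ext (by simp only [] at hlt ⊢; omega)))
  exact hmono hj

theorem lambda2_nonneg {N : ℕ} (hN : 2 ≤ N) {A : Matrix (Fin N) (Fin N) ℝ}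
    (hA : A.PosSemidef) : 0 ≤ lambda2 A := by
  obtain ⟨_, k₁, h, -⟩ := exists_lambda2_le hN hA.isHermitian
  exact h ▸ hA.eigenvalues_nonneg k₁

/-- Poincaré inequality: if a positive semidefinite `A` annihilates the all-ones vector, then its
quadratic form is at least `lambda2 A` times the squared norm on mean-zero vectors. When
`lambda2 A > 0` the kernel is spanned by a single eigenvector, hence by the all-ones vector;
when `lambda2 A = 0` there is nothing to prove. -/
theorem lambda2_mul_sum_sq_le {N : ℕ} (hN : 2 ≤ N) {A : Matrix (Fin N) (Fin N) ℝ}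
    (hA : A.PosSemidef) (hone : A *ᵥ (fun _ => 1) = 0) (y : Fin N → ℝ) (hy : ∑ i, y i = 0) :
    lambda2 A * ∑ i, y i ^ 2 ≤ y ⬝ᵥ A *ᵥ y := by
  have hH := hA.isHermitian
  obtain ⟨k₀, k₁, -, hk⟩ := exists_lambda2_le hN hH
  rcases (lambda2_nonneg hN hA).eq_or_lt with h0 | hpos
  · rw [← h0, zero_mul]
    simpa using hA.dotProduct_mulVec_nonneg y
  set b := hH.eigenvectorBasis with hb
  set e := hH.eigenvalues with he
  have hsymm : Aᵀ = A := by simpa using hH.eq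
  -- the coefficients of `A z` in the eigenbasis
  have hcoef : ∀ i (z : Fin N → ℝ), (b i).ofLp ⬝ᵥ A *ᵥ z = e i * ((b i).ofLp ⬝ᵥ z) := by
    intro i z
    rw [Matrix.dotProduct_mulVec, ← Matrix.mulVec_transpose, hsymm, hH.mulVec_eigenvectorBasis,
      smul_dotProduct, smul_eq_mul]
  have hparseval : ∀ z w : Fin N → ℝ,
      z ⬝ᵥ w = ∑ i, ((b i).ofLp ⬝ᵥ z) * ((b i).ofLp ⬝ᵥ w) := by
    intro z w
    have := b.sum_inner_mul_inner (WithLp.toLp 2 z) (WithLp.toLp 2 w)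
    simp only [EuclideanSpace.inner_eq_star_dotProduct, star_trivial] at this
    rw [dotProduct_comm z w, ← this]
    exact Finset.sum_congr rfl fun i _ => by rw [dotProduct_comm w]
  have horth1 : ∀ i, i ≠ k₀ → (b i).ofLp ⬝ᵥ (fun _ => (1 : ℝ)) = 0 := by
    intro i hi
    have h := hcoef i (fun _ => 1)
    rw [hone, dotProduct_zero] at h
    exact (mul_eq_zero.mp h.symm).resolve_left (hpos.trans_le (hk i hi)).ne'
  -- the all-ones vector is a multiple of the lowest eigenvector, so `y` is orthogonal to the latter
  have hyk : (b k₀).ofLp ⬝ᵥ y = 0 := by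
    have h1 := hparseval (fun _ => 1) y
    have h2 := hparseval (fun _ => 1) (fun _ => 1)
    rw [Finset.sum_eq_single k₀ (fun i _ hi => by rw [horth1 i hi, zero_mul]) (by simp)] at h1 h2
    have h3 : (fun _ => (1:ℝ)) ⬝ᵥ y = 0 := by simpa [dotProduct] using hy
    have h4 : (fun _ : Fin N => (1:ℝ)) ⬝ᵥ (fun _ => (1:ℝ)) = N := by simp [dotProduct]
    rw [h3] at h1
    rcases mul_eq_zero.mp h1.symm with h | h
    · rw [h4, h, zero_mul] at h2
      have : (N : ℝ) ≠ 0 := by positivity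
      exact absurd h2 this
    · exact h
  have hsq : ∑ i, y i ^ 2 = y ⬝ᵥ y := by simp [dotProduct, sq]
  rw [hsq, hparseval y y, hparseval y (A *ᵥ y), Finset.mul_sum]
  refine Finset.sum_le_sum fun i _ => ?_
  rw [hcoef]
  by_cases hi : i = k₀
  · rw [hi, hyk]; simp
  · nlinarith [hk i hi, mul_self_nonneg ((b i).ofLp ⬝ᵥ y)]

theorem incMat_transpose_mulVec {N M : ℕ} {tl hd : Fin M → Fin N} (hne : ∀ l, tl l ≠ hd l)
    (y : Fin N → ℝ) (l : Fin M) : ((incMat tl hd)ᵀ *ᵥ y) l = y (hd l) - y (tl l) := by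
  have : ∀ k, (incMat tl hd)ᵀ l k * y k =
      (if k = hd l then y k else 0) - (if k = tl l then y k else 0) := by
    intro k
    have := hne l
    simp only [incMat, Matrix.transpose_apply, Matrix.of_apply]
    split_ifs <;> simp_all
  simp only [Matrix.mulVec, dotProduct, this, Finset.sum_sub_distrib]
  simp

theorem posSemidef_incMat {N M : ℕ} (tl hd : Fin M → Fin N) :
    (incMat tl hd * (incMat tl hd)ᵀ).PosSemidef := by
  simpa using Matrix.posSemidef_self_mul_conjTranspose (incMat tl hd)

theorem lambda2_mul_sum_sq_le_edges {N M : ℕ} (hN : 2 ≤ N) {tl hd : Fin M → Fin N}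
    (hne : ∀ l, tl l ≠ hd l) (y : Fin N → ℝ) (hy : ∑ i, y i = 0) :
    lambda2 (incMat tl hd * (incMat tl hd)ᵀ) * ∑ i, y i ^ 2 ≤
      ∑ l, (y (hd l) - y (tl l)) ^ 2 := by
  refine (lambda2_mul_sum_sq_le hN (posSemidef_incMat tl hd) ?_ y hy).trans_eq ?_
  · rw [← Matrix.mulVec_mulVec]
    have : (incMat tl hd)ᵀ *ᵥ (fun _ => (1:ℝ)) = 0 := by
      ext l; rw [incMat_transpose_mulVec hne]; simp
    rw [this, Matrix.mulVec_zero]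
  · rw [← Matrix.mulVec_mulVec, Matrix.dotProduct_mulVec, ← Matrix.mulVec_transpose]
    simp only [dotProduct, incMat_transpose_mulVec hne, sq]

/-- The Poincaré inequality for vector-valued states, obtained coordinate by coordinate. -/
theorem lambda2_mul_sum_norm_sq_le {N M n : ℕ} (hN : 2 ≤ N) {tl hd : Fin M → Fin N}
    (hne : ∀ l, tl l ≠ hd l) (y : Fin N → EuclideanSpace ℝ (Fin n)) (hy : ∑ i, y i = 0) :
    lambda2 (incMat tl hd * (incMat tl hd)ᵀ) * ∑ i, ‖y i‖ ^ 2 ≤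
      ∑ l, ‖y (hd l) - y (tl l)‖ ^ 2 := by
  simp only [EuclideanSpace.real_norm_sq_eq]
  rw [Finset.sum_comm, Finset.mul_sum, Finset.sum_comm (s := Finset.univ (α := Fin M))]
  refine Finset.sum_le_sum fun c _ => ?_
  refine lambda2_mul_sum_sq_le_edges hN hne (fun i => y i c) ?_
  have := congrArg (fun z : EuclideanSpace ℝ (Fin n) => z c) hy
  simpa using this

theorem sum_edges_le_opNorm {N M : ℕ} {tl hd : Fin M → Fin N}
    (hne : ∀ l, tl l ≠ hd l) (y : Fin N → ℝ) :
    ∑ l, (y (hd l) - y (tl l)) ^ 2 ≤ opNorm (incMat tl hd)ᵀ ^ 2 * ∑ i, y i ^ 2 := by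
  have h := (LinearMap.toContinuousLinearMap
    (Matrix.toEuclideanLin (incMat tl hd)ᵀ)).le_opNorm (WithLp.toLp 2 y)
  have h2 := pow_le_pow_left₀ (norm_nonneg _) h 2
  rw [mul_pow, EuclideanSpace.real_norm_sq_eq, EuclideanSpace.real_norm_sq_eq] at h2
  simpa [Matrix.toLpLin_apply, incMat_transpose_mulVec hne, opNorm] using h2

/-- Handshake identity: summing over the enumerated edges in both orientations is the same as
summing over all ordered pairs of neighbours. -/
theorem sum_edges_add_swap {N M : ℕ} {G : SimpleGraph (Fin N)} [DecidableRel G.Adj]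
    {tl hd : Fin M → Fin N} (hadj : ∀ l, G.Adj (tl l) (hd l))
    (henum : ∀ e ∈ G.edgeSet, ∃! l : Fin M, s(tl l, hd l) = e) (F : Fin N → Fin N → ℝ) :
    ∑ l, (F (hd l) (tl l) + F (tl l) (hd l)) = ∑ i, ∑ j ∈ G.neighborFinset i, F i j := by
  have key : ∀ i j, (if G.Adj i j then F i j else 0) =
      ∑ l, ((if hd l = i then if tl l = j then F i j else 0 else 0) +
        (if tl l = i then if hd l = j then F i j else 0 else 0)) := by
    intro i j
    by_cases hij : G.Adj i j
    · obtain ⟨l, hl, hu⟩ := henum s(i, j) hij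
      have hne := hij.ne
      rw [if_pos hij, Finset.sum_eq_single l]
      · rcases Sym2.eq_iff.mp hl with ⟨h1, h2⟩ | ⟨h1, h2⟩
        · simp [h1, h2, hne.symm]
        · simp [h1, h2, hne.symm]
      · intro k _ hkl
        have hk : ¬ s(tl k, hd k) = s(i, j) := fun h => hkl (hu k h)
        rw [Sym2.eq_iff] at hk
        push Not at hk
        split_ifs <;> simp_all
      · simp
    · rw [if_neg hij, Finset.sum_eq_zero]
      intro k _
      have := hadj k
      have := this.symm
      split_ifs <;> simp_all
  have hR : ∀ i, ∑ j ∈ G.neighborFinset i, F i j = ∑ j, if G.Adj i j then F i j else 0 := by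
    intro i
    rw [← Finset.sum_filter]
    congr 1
    ext j; simp
  simp only [hR, key]
  rw [Finset.sum_congr rfl fun i _ => Finset.sum_comm, Finset.sum_comm]
  refine Finset.sum_congr rfl fun l _ => ?_
  simp [Finset.sum_add_distrib]

/-- The comparison of `λ₂` with `|Dᵀ|` that makes the constant `K` large enough. Testing the
quadratic form of the Laplacian on `e_a - e_b` yields both `λ₂ ≤ N` and `λ₂ ≤ |Dᵀ|²`. -/
theorem lambda2_sq_le {N M : ℕ} (hN : 2 ≤ N) {G : SimpleGraph (Fin N)} [DecidableRel G.Adj]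
    {tl hd : Fin M → Fin N} (hadj : ∀ l, G.Adj (tl l) (hd l))
    (henum : ∀ e ∈ G.edgeSet, ∃! l : Fin M, s(tl l, hd l) = e) :
    lambda2 (incMat tl hd * (incMat tl hd)ᵀ) ^ 2 ≤
      2 * ((N : ℝ) - 1) * opNorm (incMat tl hd)ᵀ ^ 2 := by
  have hne : ∀ l, tl l ≠ hd l := fun l => (hadj l).ne
  set a : Fin N := ⟨0, by omega⟩
  set b : Fin N := ⟨1, by omega⟩
  have hab : a ≠ b := by simp [a, b]
  set lam := lambda2 (incMat tl hd * (incMat tl hd)ᵀ)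
  have hlam : 0 ≤ lam := lambda2_nonneg hN (posSemidef_incMat tl hd)
  set y : Fin N → ℝ := fun i => (if i = a then 1 else 0) - (if i = b then 1 else 0) with hy
  have hsum : ∑ i, y i = 0 := by simp [hy]
  have hsq : ∑ i, y i ^ 2 = 2 := by
    have : ∀ i, y i ^ 2 = (if i = a then 1 else 0) + (if i = b then 1 else 0) := by
      intro i
      simp only [hy]
      split_ifs <;> simp_all
    simp only [this, Finset.sum_add_distrib]
    simp; norm_num
  have h1 := lambda2_mul_sum_sq_le_edges hN hne y hsum
  have h2 := sum_edges_le_opNorm hne y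
  have h3 : 2 * ∑ l, (y (hd l) - y (tl l)) ^ 2 ≤ 2 * (N * 2) := by
    have h := sum_edges_add_swap hadj henum (fun i j => (y i - y j) ^ 2)
    have h4 : ∑ i, ∑ j ∈ G.neighborFinset i, (y i - y j) ^ 2 ≤ ∑ i, ∑ j, (y i - y j) ^ 2 :=
      Finset.sum_le_sum fun i _ => Finset.sum_le_sum_of_subset_of_nonneg
        (Finset.subset_univ _) fun _ _ _ => sq_nonneg _
    have h5 : ∑ i, ∑ j, (y i - y j) ^ 2 = 2 * (N * ∑ i, y i ^ 2) := by
      simp only [sub_sq, Finset.sum_add_distrib, Finset.sum_sub_distrib, ← Finset.mul_sum, hsum]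
      simp [← Finset.mul_sum]; ring
    rw [hsq] at h5
    rw [← h5]
    refine le_trans (le_of_eq ?_) h4
    rw [← h, Finset.mul_sum]
    exact Finset.sum_congr rfl fun l _ => by ring
  rw [hsq] at h1 h2
  have hN' : (2:ℝ) ≤ N := by exact_mod_cast hN
  have h6 : lam ≤ N := by linarith
  have h7 : lam ≤ opNorm (incMat tl hd)ᵀ ^ 2 := by linarith
  rw [sq]
  exact mul_le_mul (by linarith) h7 hlam (by linarith)

open InnerProductSpace in
/-- Summation by parts on the graph: the edgewise derivative of the total energy in the direction
`w` is the inner product of `w` with the feedback field. -/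
theorem sum_edges_inner {N M n : ℕ} {G : SimpleGraph (Fin N)} [DecidableRel G.Adj]
    {tl hd : Fin M → Fin N} (hadj : ∀ l, G.Adj (tl l) (hd l))
    (henum : ∀ e ∈ G.edgeSet, ∃! l : Fin M, s(tl l, hd l) = e) (R' R : ℝ)
    (x w : Fin N → EuclideanSpace ℝ (Fin n)) :
    ∑ l, rNL R' R ‖x (hd l) - x (tl l)‖ * ⟪x (hd l) - x (tl l), w (hd l) - w (tl l)⟫_ℝ =
      ∑ i, ⟪∑ j ∈ G.neighborFinset i, rNL R' R ‖x i - x j‖ • (x i - x j), w i⟫_ℝ := by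
  simp only [sum_inner, real_inner_smul_left]
  rw [← sum_edges_add_swap hadj henum
    (fun i j => rNL R' R ‖x i - x j‖ * ⟪x i - x j, w i⟫_ℝ)]
  refine Finset.sum_congr rfl fun l _ => ?_
  rw [norm_sub_rev (x (tl l)), inner_sub_right, ← neg_sub (x (hd l)) (x (tl l)), inner_neg_left]
  ring

/-! ### The edge potential -/

theorem rNL_eq {R' R : ℝ} (h0 : 0 < R') (h : R' < R) (s : ℝ) :
    rNL R' R s = max 1 (min s R / R') := by
  unfold rNL
  split_ifs with h1 h2
  · rw [max_eq_left]
    rw [div_le_one h0]; exact (min_le_left _ _).trans h1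
  · rw [min_eq_left h2, max_eq_right]
    rw [one_le_div h0]; linarith
  · rw [min_eq_right (by linarith), max_eq_right]
    rw [one_le_div h0]; linarith

theorem one_le_rNL {R' R : ℝ} (h0 : 0 < R') (h : R' < R) (s : ℝ) : 1 ≤ rNL R' R s := by
  rw [rNL_eq h0 h]; exact le_max_left _ _

theorem continuous_rNL {R' R : ℝ} (h0 : 0 < R') (h : R' < R) : Continuous (rNL R' R) := by
  rw [funext (rNL_eq h0 h)]
  fun_prop

/-- The potential `∫₀^ρ r(s) s ds` of an edge of length `ρ`, expressed as a function of `q = ρ²`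
through the substitution `u = s²`. In this variable it is continuously differentiable even at
`q = 0`, so the energy can be differentiated along trajectories without treating coinciding agents
separately. -/
noncomputable def edgePot (R' R q : ℝ) : ℝ := ∫ u in (0:ℝ)..q, rNL R' R √u / 2

theorem hasDerivAt_edgePot {R' R : ℝ} (h0 : 0 < R') (h : R' < R) (q : ℝ) :
    HasDerivAt (edgePot R' R) (rNL R' R √q / 2) q := by
  have hc : Continuous fun u => rNL R' R √u / 2 :=
    ((continuous_rNL h0 h).comp Real.continuous_sqrt).div_const 2
  exact hc.integral_hasStrictDerivAt 0 q |>.hasDerivAt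

theorem strictMono_edgePot {R' R : ℝ} (h0 : 0 < R') (h : R' < R) : StrictMono (edgePot R' R) :=
  strictMono_of_deriv_pos fun q => by
    rw [(hasDerivAt_edgePot h0 h q).deriv]
    linarith [one_le_rNL h0 h √q]

theorem edgePot_nonneg {R' R : ℝ} (h0 : 0 < R') (h : R' < R) {q : ℝ} (hq : 0 ≤ q) :
    0 ≤ edgePot R' R q := by
  have := (strictMono_edgePot h0 h).monotone hq
  simpa [edgePot] using this

/-- The potential of an edge of length `R'`. -/
theorem edgePot_inner {R' R : ℝ} (h0 : 0 < R') : edgePot R' R (R' ^ 2) = R' ^ 2 / 2 := by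
  have : edgePot R' R (R' ^ 2) = ∫ u in (0:ℝ)..R' ^ 2, (1 / 2 : ℝ) := by
    refine intervalIntegral.integral_congr fun u hu => ?_
    rw [Set.uIcc_of_le (by positivity)] at hu
    have : √u ≤ R' := Real.sqrt_le_iff.mpr ⟨h0.le, hu.2⟩
    simp [rNL, this]
  rw [this]; simp; ring

/-- The potential of an edge of length `R`. -/
theorem edgePot_outer {R' R : ℝ} (h0 : 0 < R') (h : R' < R) :
    edgePot R' R (R ^ 2) = R' ^ 2 / 2 + (R ^ 3 - R' ^ 3) / (3 * R') := by
  have hc : Continuous fun u => rNL R' R √u / 2 :=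
    ((continuous_rNL h0 h).comp Real.continuous_sqrt).div_const 2
  have hsplit : edgePot R' R (R ^ 2) =
      edgePot R' R (R' ^ 2) + ∫ u in (R' ^ 2)..R ^ 2, rNL R' R √u / 2 :=
    (intervalIntegral.integral_add_adjacent_intervals
      (hc.intervalIntegrable _ _) (hc.intervalIntegrable _ _)).symm
  rw [hsplit, edgePot_inner h0]
  congr 1
  have hle : R' ^ 2 ≤ R ^ 2 := by gcongr
  have : ∫ u in (R' ^ 2)..R ^ 2, rNL R' R √u / 2 =
      ∫ u in (R' ^ 2)..R ^ 2, (1 / (2 * R')) * u ^ (1 / 2 : ℝ) := by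
    refine intervalIntegral.integral_congr fun u hu => ?_
    rw [Set.uIcc_of_le hle] at hu
    have h1 : R' ≤ √u := Real.le_sqrt_of_sq_le hu.1
    have h2 : √u ≤ R := Real.sqrt_le_iff.mpr ⟨by linarith, hu.2⟩
    simp only [rNL_eq h0 h, min_eq_left h2, max_eq_right ((one_le_div h0).mpr h1)]
    rw [Real.sqrt_eq_rpow]
    field_simp
  rw [this, intervalIntegral.integral_const_mul, integral_rpow (Or.inl (by norm_num))]
  have hp : ∀ s : ℝ, 0 ≤ s → (s ^ 2) ^ ((1:ℝ) / 2 + 1) = s ^ 3 := by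
    intro s hs
    rw [← Real.rpow_natCast, ← Real.rpow_natCast, ← Real.rpow_mul hs]
    norm_num
  rw [hp R (by linarith), hp R' h0.le]
  field_simp
  norm_num

/-- The bound on `R'` says exactly that the energy of `M` edges of length `R'` does not exceed the
energy of a single edge of length `R`. -/
theorem mul_edgePot_inner_le {M : ℕ} (hM : 1 ≤ M) {R' R : ℝ} (h0 : 0 < R') (h : R' < R)
    (hR'M : R' ≤ (2 / (3 * (M : ℝ) - 1)) ^ ((1 : ℝ)/3) * R) :
    M * edgePot R' R (R' ^ 2) ≤ edgePot R' R (R ^ 2) := by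
  rw [edgePot_inner h0, edgePot_outer h0 h]
  have hM' : (1:ℝ) ≤ M := by exact_mod_cast hM
  have hc : 0 < 3 * (M:ℝ) - 1 := by linarith
  have h3 := pow_le_pow_left₀ h0.le hR'M 3
  rw [mul_pow, ← Real.rpow_natCast (_ ^ _), ← Real.rpow_mul (by positivity)] at h3
  norm_num at h3
  rw [div_mul_eq_mul_div, le_div_iff₀ hc] at h3
  have key : (M : ℝ) * (R' ^ 2 / 2) - R' ^ 2 / 2 ≤ (R ^ 3 - R' ^ 3) / (3 * R') := by
    rw [le_div_iff₀ (by positivity)]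
    nlinarith
  linarith

/-! ### Dissipation of the energy -/

open InnerProductSpace in
/-- If some edge has length at least `R'`, then the energy does not increase: the feedback field
`g` is then large enough to dominate the inputs. The sum `∑ ⟪g i, -g i + v i⟫` is the
derivative of the energy along the dynamics. -/
theorem dissipation {N M n : ℕ} (hN : 2 ≤ N)
    {G : SimpleGraph (Fin N)} [DecidableRel G.Adj]
    {tl hd : Fin M → Fin N} (hadj : ∀ l, G.Adj (tl l) (hd l))
    (henum : ∀ e ∈ G.edgeSet, ∃! l : Fin M, s(tl l, hd l) = e)
    {R R' : ℝ} (h0 : 0 < R') (h : R' < R)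
    (x v g : Fin N → EuclideanSpace ℝ (Fin n))
    (hg : ∀ i, g i = ∑ j ∈ G.neighborFinset i, rNL R' R ‖x i - x j‖ • (x i - x j))
    (hv : ∀ i, ‖v i‖ ≤ R' / Kconst tl hd)
    {l₀ : Fin M} (hl₀ : R' ≤ ‖x (hd l₀) - x (tl l₀)‖) :
    ∑ i, ⟪g i, -g i + v i⟫_ℝ ≤ 0 := by
  have hne : ∀ l, tl l ≠ hd l := fun l => (hadj l).ne
  have hN' : (2:ℝ) ≤ N := by exact_mod_cast hN
  set lam := lambda2 (incMat tl hd * (incMat tl hd)ᵀ) with hlamdef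
  have hlam : 0 ≤ lam := lambda2_nonneg hN (posSemidef_incMat tl hd)
  set δ := R' / Kconst tl hd with hδ
  have hδ0 : 0 ≤ δ := (norm_nonneg _).trans (hv ⟨0, by omega⟩)
  -- centre the configuration at its barycentre
  set c := (N : ℝ)⁻¹ • ∑ i, x i with hc
  set y : Fin N → EuclideanSpace ℝ (Fin n) := fun i => x i - c with hy
  have hysum : ∑ i, y i = 0 := by
    simp only [hy, Finset.sum_sub_distrib, Finset.sum_const, Finset.card_univ, Fintype.card_fin]
    rw [hc, ← Nat.cast_smul_eq_nsmul ℝ, smul_smul, mul_inv_cancel₀ (by positivity), one_smul,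
      sub_self]
  have hyd : ∀ i j, y i - y j = x i - x j := fun i j => by simp [hy]
  set X := ∑ i, ‖y i‖ ^ 2 with hX
  set Γ := ∑ i, ‖g i‖ ^ 2 with hΓ
  have hΓ0 : 0 ≤ Γ := Finset.sum_nonneg fun _ _ => sq_nonneg _
  -- `λ₂ |y|² ≤ ⟨g, y⟩`, because all gains are at least one
  have hgy : lam * X ≤ ∑ i, ⟪g i, y i⟫_ℝ := by
    simp only [hg]
    rw [← sum_edges_inner hadj henum]
    refine (lambda2_mul_sum_norm_sq_le hN hne y hysum).trans (Finset.sum_le_sum fun l _ => ?_)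
    rw [hyd, real_inner_self_eq_norm_sq]
    exact le_mul_of_one_le_left (sq_nonneg _) (one_le_rNL h0 h _)
  have hcs : (∑ i, ⟪g i, y i⟫_ℝ) ^ 2 ≤ Γ * X := by
    refine le_trans ?_ (Finset.sum_mul_sq_le_sq_mul_sq _ _ _)
    rw [sq_le_sq]
    refine le_trans (Finset.abs_sum_le_sum_abs _ _) (le_trans ?_ (le_abs_self _))
    exact Finset.sum_le_sum fun i _ => abs_real_inner_le_norm _ _
  -- one long edge forces the centred configuration to be large
  have hXlow : R' ^ 2 ≤ 2 * X := by
    have h1 : ‖y (hd l₀)‖ ^ 2 + ‖y (tl l₀)‖ ^ 2 ≤ X := by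
      rw [← Finset.sum_pair (f := fun i => ‖y i‖ ^ 2) (hne l₀).symm]
      exact Finset.sum_le_sum_of_subset_of_nonneg (Finset.subset_univ _)
        fun _ _ _ => sq_nonneg _
    have h2 : R' ≤ ‖y (hd l₀)‖ + ‖y (tl l₀)‖ := by
      rw [← hyd] at hl₀
      exact hl₀.trans (norm_sub_le _ _)
    linarith [pow_le_pow_left₀ h0.le h2 2, add_sq_le (a := ‖y (hd l₀)‖) (b := ‖y (tl l₀)‖)]
  have hXpos : 0 < X := by linarith [pow_pos h0 2]
  have hΓlow : lam ^ 2 * X ≤ Γ := by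
    have h1 : (lam * X) ^ 2 ≤ Γ * X := 
      (pow_le_pow_left₀ (mul_nonneg hlam hXpos.le) hgy 2).trans hcs
    exact le_of_mul_le_mul_right (by linarith) hXpos
  -- the constant `K` is chosen so that the inputs are dominated by `g`
  have hδle : N * δ ^ 2 ≤ lam ^ 2 * R' ^ 2 / 2 := by
    have hL := lambda2_sq_le hN hadj henum
    rw [← hlamdef] at hL
    set D := opNorm (incMat tl hd)ᵀ
    have hD0 : 0 ≤ D := norm_nonneg _
    have hδeq : δ = R' * lam ^ 2 / (2 * √((N : ℝ) * ((N : ℝ) - 1)) * D) := by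
      rw [hδ, Kconst, div_div_eq_mul_div]
    rcases hD0.eq_or_lt with hD | hD
    · rw [hδeq, ← hD]; simp; positivity
    · have hs : √((N : ℝ) * ((N : ℝ) - 1)) ^ 2 = N * (N - 1) := Real.sq_sqrt (by nlinarith)
      have hN1 : (0:ℝ) < N - 1 := by linarith
      have hNpos : (0:ℝ) < N := by linarith
      rw [hδeq, div_pow, mul_pow, mul_pow, mul_pow, hs, mul_div_assoc', div_le_iff₀ (by positivity)]
      have : 0 ≤ N * R' ^ 2 * lam ^ 2 * (2 * ((N : ℝ) - 1) * D ^ 2 - lam ^ 2) :=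
        mul_nonneg (by positivity) (by linarith)
      linarith
  have hNΓ : N * δ ^ 2 ≤ Γ := by linarith [mul_nonneg (sq_nonneg lam) (sub_nonneg.mpr hXlow)]
  have hS : (∑ i, ‖g i‖) ^ 2 ≤ N * Γ := by
    simpa using sq_sum_le_card_mul_sum_sq (s := Finset.univ) (f := fun i => ‖g i‖)
  have hSδ : (∑ i, ‖g i‖) * δ ≤ Γ := by
    refine le_of_sq_le_sq ?_ hΓ0
    linarith [mul_le_mul_of_nonneg_right hS (sq_nonneg δ), mul_le_mul_of_nonneg_right hNΓ hΓ0]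
  have hgv : ∑ i, ⟪g i, v i⟫_ℝ ≤ (∑ i, ‖g i‖) * δ := by
    rw [Finset.sum_mul]
    exact Finset.sum_le_sum fun i _ => (real_inner_le_norm _ _).trans
      (mul_le_mul_of_nonneg_left (hv i) (norm_nonneg _))
  simp only [inner_add_right, inner_neg_right, real_inner_self_eq_norm_sq,
    Finset.sum_add_distrib, Finset.sum_neg_distrib]
  linarith

/-- A function that starts at most at `C` and is nonincreasing whenever it exceeds `C` never
exceeds `C`. It is compared with the strictly increasing barrier `C + ε (1 + s)`. -/
theorem le_of_deriv_nonpos_above {V V' : ℝ → ℝ} {T C : ℝ}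
    (hV : ∀ t ∈ Set.Ico (0:ℝ) T, HasDerivWithinAt V (V' t) (Set.Ico (0:ℝ) T) t)
    (h0 : V 0 ≤ C) (hneg : ∀ t ∈ Set.Ico (0:ℝ) T, C < V t → V' t ≤ 0) :
    ∀ t ∈ Set.Ico (0:ℝ) T, V t ≤ C := by
  intro t ht
  have hsub : ∀ s ∈ Set.Icc 0 t, s ∈ Set.Ico (0:ℝ) T := fun s hs => ⟨hs.1, hs.2.trans_lt ht.2⟩
  have key : ∀ ε > 0, V t ≤ C + ε * (1 + t) := by
    intro ε hε
    refine image_le_of_deriv_right_lt_deriv_boundary (f := V) (f' := V') (a := 0) (b := t)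
      (B := fun s => C + ε * (1 + s)) (B' := fun _ => ε) ?_ ?_ ?_ ?_ ?_ ⟨ht.1, le_rfl⟩
    · exact fun s hs => ((hV s (hsub s hs)).mono hsub).continuousWithinAt
    · intro s hs
      have hs' := hsub s ⟨hs.1, hs.2.le⟩
      exact (hV s hs').mono_of_mem_nhdsWithin (Ico_mem_nhdsGE_of_mem hs')
    · simp; linarith
    · intro s
      simpa using (((hasDerivAt_id s).const_add 1).const_mul ε).const_add C
    · intro s hs heq
      have : 0 < ε * (1 + s) := mul_pos hε (by linarith [hs.1])
      exact (hneg s (hsub s ⟨hs.1, hs.2.le⟩) (by linarith)).trans_lt hε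
  refine le_of_forall_pos_le_add fun ε hε => ?_
  have h1 : 0 < 1 + t := by linarith [ht.1]
  have := key (ε / (1 + t)) (by positivity)
  rwa [div_mul_cancel₀ _ h1.ne'] at this

/-! ### Connectivity maintenance -/

/-- **Connectivity maintenance for the nonlinear feedback (Corollary, case (NL)).** If the
agents evolve according to `ẋ_i = -∑_{j∈N_i} r(‖x_i-x_j‖)(x_i-x_j) + v_i` on `[0,T)` with
the nonlinear gain `r`, `‖v_i(t)‖ ≤ δ = R̃/K`, `R̃ ≤ (2/(3M-1))^{1/3} R`, and initially
`‖x_i(0)-x_j(0)‖ ≤ R̃` on every edge, then `‖x_i(t)-x_j(t)‖ ≤ R` on every edge for every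
`t ∈ [0,T)`. -/
theorem connectivity_nonlinear {N M n : ℕ} (hN : 2 ≤ N)
    (G : SimpleGraph (Fin N)) [DecidableRel G.Adj] (hconn : G.Connected)
    (tl hd : Fin M → Fin N) (hadj : ∀ l, G.Adj (tl l) (hd l))
    (henum : ∀ e ∈ G.edgeSet, ∃! l : Fin M, s(tl l, hd l) = e)
    (hM : G.edgeFinset.card = M)
    (R R' T : ℝ) (hR'pos : 0 < R') (hR'R : R' < R)
    (hR'M : R' ≤ (2 / (3 * (M : ℝ) - 1)) ^ ((1 : ℝ)/3) * R)
    (x v : Fin N → ℝ → EuclideanSpace ℝ (Fin n))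
    (hdyn : ∀ i, ∀ t ∈ Set.Ico (0:ℝ) T, HasDerivWithinAt (x i)
      ((-∑ j ∈ G.neighborFinset i, rNL R' R ‖x i t - x j t‖ • (x i t - x j t)) + v i t)
      (Set.Ico (0:ℝ) T) t)
    (hv : ∀ i, ∀ t ∈ Set.Ico (0:ℝ) T, ‖v i t‖ ≤ R' / Kconst tl hd)
    (hinit : ∀ i j, G.Adj i j → ‖x i 0 - x j 0‖ ≤ R') :
    ∀ t ∈ Set.Ico (0:ℝ) T, ∀ i j, G.Adj i j → ‖x i t - x j t‖ ≤ R := by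
  intro t ht i j hij
  obtain ⟨l₁, hl₁, -⟩ := henum s(i, j) hij
  have hM1 : 1 ≤ M := l₁.pos
  have hT : (0:ℝ) ∈ Set.Ico (0:ℝ) T := ⟨le_rfl, ht.1.trans_lt ht.2⟩
  set g : Fin N → ℝ → EuclideanSpace ℝ (Fin n) := fun i t =>
    ∑ j ∈ G.neighborFinset i, rNL R' R ‖x i t - x j t‖ • (x i t - x j t) with hg
  set V : ℝ → ℝ := fun t => ∑ l, edgePot R' R (‖x (hd l) t - x (tl l) t‖ ^ 2) with hV
  have hVderiv : ∀ t ∈ Set.Ico (0:ℝ) T, HasDerivWithinAt V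
      (∑ i, inner ℝ (g i t) (-g i t + v i t)) (Set.Ico (0:ℝ) T) t := by
    intro t ht
    rw [← sum_edges_inner hadj henum R' R (fun i => x i t) (fun i => -g i t + v i t)]
    refine HasDerivWithinAt.fun_sum fun l _ => ?_
    have h1 := ((hdyn (hd l) t ht).sub (hdyn (tl l) t ht)).norm_sq
    have h2 := (hasDerivAt_edgePot hR'pos hR'R _).comp_hasDerivWithinAt t h1
    refine h2.congr_deriv ?_
    simp only [Pi.sub_apply]
    rw [Real.sqrt_sq (norm_nonneg _)]
    ring
  have hV0 : V 0 ≤ M * edgePot R' R (R' ^ 2) := by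
    refine (Finset.sum_le_card_nsmul _ _ (edgePot R' R (R' ^ 2)) fun l _ => ?_).trans_eq (by simp)
    exact (strictMono_edgePot hR'pos hR'R).monotone
      (pow_le_pow_left₀ (norm_nonneg _) (hinit _ _ (hadj l).symm) 2)
  -- energy above `M P(R')` forces some edge to be longer than `R'`, where dissipation applies
  have hVle := le_of_deriv_nonpos_above hVderiv hV0 (fun t ht hlt => by
    obtain ⟨l₀, -, hl₀⟩ : ∃ l ∈ Finset.univ, edgePot R' R (R' ^ 2) <
        edgePot R' R (‖x (hd l) t - x (tl l) t‖ ^ 2) := by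
      refine Finset.exists_lt_of_sum_lt (lt_of_eq_of_lt ?_ hlt)
      simp
    have hlong := lt_of_pow_lt_pow_left₀ 2 (norm_nonneg _)
      ((strictMono_edgePot hR'pos hR'R).lt_iff_lt.mp hl₀)
    exact dissipation hN hadj henum hR'pos hR'R (fun i => x i t) (fun i => v i t)
      (fun i => g i t) (fun i => rfl) (fun i => hv i t ht) hlong.le) t ht
  have hl₁le : ‖x (hd l₁) t - x (tl l₁) t‖ ≤ R := by
    by_contra! hgt
    have hRpos : 0 < R := hR'pos.trans hR'R
    have h1 := strictMono_edgePot hR'pos hR'R (pow_lt_pow_left₀ hgt hRpos.le two_ne_zero)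
    have h2 : edgePot R' R (‖x (hd l₁) t - x (tl l₁) t‖ ^ 2) ≤ V t :=
      Finset.single_le_sum (f := fun l => edgePot R' R (‖x (hd l) t - x (tl l) t‖ ^ 2))
        (fun l _ => edgePot_nonneg hR'pos hR'R (sq_nonneg _)) (Finset.mem_univ l₁)
    linarith [mul_edgePot_inner_le hM1 hR'pos hR'R hR'M]
  rcases Sym2.eq_iff.mp hl₁ with ⟨h1, h2⟩ | ⟨h1, h2⟩
  · rwa [h1, h2, norm_sub_rev] at hl₁le
  · rwa [h1, h2] at hl₁le
end
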